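/- For every λ > M_N·(L̂_N − L̄_N), one has p = N, the optimal weights are α_i(λ) = (m_i/M_N)·( 1 + M_N·(L̄_N − L̂_i)/λ ), and as λ → ∞ the optimal weights converge to the sample-proportional weights: α_i(λ) → m_i/M_N for every i. -/

import Mathlib

/-!
The weighted average `L̄_N` is at most the largest loss `L̂_N`, so every `λ` above
`M_N·(L̂_N − L̄_N)` is positive. For such `λ` the correction factor `1 + M_N·(L̄_N − x)/λ` is
positive at `x = L̂_N`, hence at every loss: `N` is admissible in the maximum defining `p`, and no
weight is truncated. As `λ → ∞` each correction factor tends to `1`, so eventually it is positive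
and the explicit formula gives the limit.
-/

open Finset

noncomputable section

/-- `Mpart m k = Σ_{i=1}^k m_i`: total number of samples of the first `k` clients
(clients are 0-indexed, so these are clients `0, …, k-1`). -/
def Mpart (m : ℕ → ℝ) (k : ℕ) : ℝ := ∑ i ∈ Finset.range k, m i

/-- `Lbar m L k = (Σ_{i=1}^k m_i·L̂_i) / M_k`: the `k`-average loss. -/
def Lbar (m L : ℕ → ℝ) (k : ℕ) : ℝ :=
  (∑ i ∈ Finset.range k, m i * L i) / Mpart m k

/-- The set `{ k ∈ {1, …, N} : 1 + M_k·(L̄_k − L̂_k)/λ > 0 }`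
(with `L̂_k = L (k-1)` since losses are 0-indexed). -/
def goodSet (m L : ℕ → ℝ) (lam : ℝ) (N : ℕ) : Set ℕ :=
  {k | k ∈ Finset.Icc 1 N ∧ 0 < 1 + Mpart m k * (Lbar m L k - L (k - 1)) / lam}

/-- `p = max{ k ∈ {1,…,N} : 1 + M_k·(L̄_k − L̂_k)/λ > 0 }`. -/
def pIdx (m L : ℕ → ℝ) (lam : ℝ) (N : ℕ) : ℕ := sSup (goodSet m L lam N)

/-- The optimal weights `α*_i = (m_i/M_p)·[1 + M_p·(L̄_p − L̂_i)/λ]₊` (client `i` 0-indexed). -/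
def alphaStar (m L : ℕ → ℝ) (lam : ℝ) (N : ℕ) (i : ℕ) : ℝ :=
  (m i / Mpart m (pIdx m L lam N)) *
    max 0 (1 + Mpart m (pIdx m L lam N) * (Lbar m L (pIdx m L lam N) - L i) / lam)

/-- The objective `F(α) = Σ_i α_i·L̂_i + (λ/2)·Σ_i α_i²/m_i`. -/
def objF (N : ℕ) (m L : ℕ → ℝ) (lam : ℝ) (α : ℕ → ℝ) : ℝ :=
  ∑ i ∈ Finset.range N, α i * L i + lam / 2 * ∑ i ∈ Finset.range N, (α i) ^ 2 / m i

section

variable {K : Type*} [Field K] [LinearOrder K] [IsStrictOrderedRing K]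

lemma one_add_mul_sub_div_pos_iff {M a x c : K} (hc : 0 < c) :
    0 < 1 + M * (a - x) / c ↔ M * (x - a) < c := by
  rw [← neg_sub x a, mul_neg, neg_div, ← sub_eq_add_neg, sub_pos, div_lt_one hc]

lemma tendsto_one_add_const_div_atTop [TopologicalSpace K] [OrderTopology K] (c : K) :
    Filter.Tendsto (fun x : K => 1 + c / x) Filter.atTop (nhds 1) := by
  simpa using (Filter.tendsto_id.const_div_atTop c).const_add 1

end

section

variable {N : ℕ} {m L : ℕ → ℝ}

lemma Mpart_pos {k : ℕ} (hk : k ≠ 0) (hm : ∀ i < k, 0 < m i) : 0 < Mpart m k :=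
  sum_pos (fun i hi => hm i (mem_range.mp hi)) (nonempty_range_iff.mpr hk)

lemma Lbar_le_of_forall_le {k : ℕ} {c : ℝ} (hm : ∀ i < k, 0 ≤ m i) (hM : 0 < Mpart m k)
    (hc : ∀ i < k, L i ≤ c) : Lbar m L k ≤ c := by
  rw [Lbar, div_le_iff₀ hM, Mpart, mul_comm c, sum_mul]
  refine sum_le_sum fun i hi => ?_
  rw [mem_range] at hi
  exact mul_le_mul_of_nonneg_left (hc i hi) (hm i hi)

lemma pIdx_eq_self {lam : ℝ} (hN : 1 ≤ N)
    (hpos : 0 < 1 + Mpart m N * (Lbar m L N - L (N - 1)) / lam) : pIdx m L lam N = N :=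
  IsGreatest.csSup_eq
    ⟨⟨mem_Icc.mpr ⟨hN, le_rfl⟩, hpos⟩, fun _ hk => (mem_Icc.mp hk.1).2⟩

lemma alphaStar_eq_of_pIdx_eq_self {lam : ℝ} {i : ℕ} (hp : pIdx m L lam N = N)
    (hi : 0 ≤ 1 + Mpart m N * (Lbar m L N - L i) / lam) :
    alphaStar m L lam N i =
      (m i / Mpart m N) * (1 + Mpart m N * (Lbar m L N - L i) / lam) := by
  rw [alphaStar, hp, max_eq_right hi]

lemma tendsto_alphaStar_atTop (hN : 1 ≤ N) (m L : ℕ → ℝ) (i : ℕ) :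
    Filter.Tendsto (fun lam : ℝ => alphaStar m L lam N i) Filter.atTop
      (nhds (m i / Mpart m N)) := by
  have factor_tendsto (x : ℝ) : Filter.Tendsto
      (fun lam => 1 + Mpart m N * (Lbar m L N - x) / lam) Filter.atTop (nhds 1) :=
    tendsto_one_add_const_div_atTop _
  have factor_pos (x : ℝ) :
      ∀ᶠ lam in Filter.atTop, 0 < 1 + Mpart m N * (Lbar m L N - x) / lam :=
    (factor_tendsto x).eventually_const_lt zero_lt_one
  have formula_tendsto := (factor_tendsto (L i)).const_mul (m i / Mpart m N)
  rw [mul_one] at formula_tendsto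
  refine formula_tendsto.congr' ?_
  filter_upwards [factor_pos (L (N - 1)), factor_pos (L i)] with lam hlast hi
  exact (alphaStar_eq_of_pIdx_eq_self (pIdx_eq_self hN hlast) hi.le).symm

end

theorem alphaStar_large_lambda_general
    (N : ℕ) (hN : 1 ≤ N) (m L : ℕ → ℝ)
    (hm : ∀ i < N, 0 ≤ m i) (hM : 0 < Mpart m N)
    (hL : ∀ i < N, L i ≤ L (N - 1)) :
    (∀ lam : ℝ, Mpart m N * (L (N - 1) - Lbar m L N) < lam →
      pIdx m L lam N = N ∧
      ∀ i < N, alphaStar m L lam N i =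
        (m i / Mpart m N) * (1 + Mpart m N * (Lbar m L N - L i) / lam)) ∧
    ∀ i, Filter.Tendsto (fun lam : ℝ => alphaStar m L lam N i)
      Filter.atTop (nhds (m i / Mpart m N)) := by
  refine ⟨fun lam hlam => ?_, tendsto_alphaStar_atTop hN m L⟩
  have hlam_pos : 0 < lam :=
    (mul_nonneg hM.le (sub_nonneg.mpr (Lbar_le_of_forall_le hm hM hL))).trans_lt hlam
  have factor_pos {x : ℝ} (hx : x ≤ L (N - 1)) :
      0 < 1 + Mpart m N * (Lbar m L N - x) / lam := by
    rw [one_add_mul_sub_div_pos_iff hlam_pos]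
    exact lt_of_le_of_lt (by gcongr) hlam
  have hp : pIdx m L lam N = N := pIdx_eq_self hN (factor_pos le_rfl)
  exact ⟨hp, fun i hi => alphaStar_eq_of_pIdx_eq_self hp (factor_pos (hL i hi)).le⟩

/-- for `λ > M_N·(L̂_N − L̄_N)` one has `p = N` and
`α_i(λ) = (m_i/M_N)·(1 + M_N·(L̄_N − L̂_i)/λ)`; as `λ → ∞` the weights converge to
the sample-proportional weights `m_i/M_N`. -/
theorem alphaStar_large_lambda
    (N : ℕ) (hN : 1 ≤ N) (m L : ℕ → ℝ)
    (hm : ∀ i < N, 0 < m i)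
    (hL : ∀ i j, i ≤ j → j < N → L i ≤ L j) :
    (∀ lam : ℝ, Mpart m N * (L (N - 1) - Lbar m L N) < lam →
      pIdx m L lam N = N ∧
      ∀ i < N, alphaStar m L lam N i =
        (m i / Mpart m N) * (1 + Mpart m N * (Lbar m L N - L i) / lam)) ∧
    ∀ i < N, Filter.Tendsto (fun lam : ℝ => alphaStar m L lam N i)
      Filter.atTop (nhds (m i / Mpart m N)) := by
  have h := alphaStar_large_lambda_general N hN m L (fun i hi => (hm i hi).le)
    (Mpart_pos (by lia) hm) fun i hi => hL i (N - 1) (by lia) (by lia)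
  exact ⟨h.1, fun i _ => h.2 i⟩
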